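/- arXiv:2202.10703 — 2 statements merged into one kernel-verified Lean document; each statement's English description precedes it below -/
import Mathlib

section
/- There exists a constant C₁ > 0 such that for every Q ∈ Sym₀ one has f(Q) ≥ C₁ ( |Q|² − (2/3)s*² )². -/
/- STATEMENT 2: There exists C₁ > 0 such that for every Q ∈ Sym₀,
f(Q) ≥ C₁ ( |Q|² − (2/3)s*² )², where |Q|² = tr(Q²). -/

noncomputable section

open Matrix

abbrev Mat3 : Type := Matrix (Fin 3) (Fin 3) ℝ

def Sym0 : Set Mat3 := {Q | Q.IsSymm ∧ Q.trace = 0}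

def sStar (a b c : ℝ) : ℝ := (b + Real.sqrt (b ^ 2 + 24 * a * c)) / (4 * c)

def fLdG (a b c C : ℝ) (Q : Mat3) : ℝ :=
  C - a / 2 * (Q * Q).trace - b / 3 * (Q * Q * Q).trace + c / 4 * ((Q * Q).trace) ^ 2

/-!
Write `t = tr Q²`, `u = tr Q³` and `s = s*`, the larger root of `2cs² = bs + 3a`.  For traceless
symmetric `Q` the discriminant of the characteristic polynomial is nonnegative, which says
`6u² ≤ t³`.  By AM-GM, `u ≤ √(t³/6) ≤ (s/6) t + t²/(4s)`, with equality at the uniaxial state of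
amplitude `s` and at `0`.  Inserting this into `f` leaves a quadratic polynomial in `t` with leading
coefficient `κ = c/4 - b/(12s)`, and the equation for `s` places its vertex at `t = (2/3)s²`.  The
remaining constant is the value of `f` at the uniaxial state of amplitude `s`, hence nonnegative,
so `f ≥ κ (t - (2/3)s²)²`.  Finally `κ > 0` amounts to `b < 3cs`, that is, to `-b² < 27ac`.
-/

theorem trace_pow_eq_sum_eigenvalues_pow {𝕜 n : Type*} [RCLike 𝕜] [Fintype n] [DecidableEq n]
    {A : Matrix n n 𝕜} (hA : A.IsHermitian) (k : ℕ) :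
    (A ^ k).trace = ∑ i, (hA.eigenvalues i : 𝕜) ^ k := by
  conv_lhs => rw [hA.spectral_theorem, ← map_pow, diagonal_pow, Unitary.conjStarAlgAut_apply,
    trace_mul_cycle, Unitary.coe_star_mul_self, one_mul, trace_diagonal]
  rfl

theorem sum_sq_pow_three_eq_of_sum_eq_zero {R : Type*} [CommRing R] {x y z : R}
    (h : x + y + z = 0) :
    (x ^ 2 + y ^ 2 + z ^ 2) ^ 3 =
      6 * (x ^ 3 + y ^ 3 + z ^ 3) ^ 2 + 2 * ((x - y) * (y - z) * (z - x)) ^ 2 := by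
  obtain rfl : z = -(x + y) := (neg_eq_of_add_eq_zero_right h).symm
  ring

theorem six_mul_trace_cube_sq_le {Q : Mat3} (hQ : Q ∈ Sym0) :
    6 * (Q * Q * Q).trace ^ 2 ≤ (Q * Q).trace ^ 3 := by
  obtain ⟨hsymm, htrace⟩ := hQ
  have hherm : Q.IsHermitian := (conjTranspose_eq_transpose_of_trivial Q).trans hsymm
  have hsum := hherm.trace_eq_sum_eigenvalues.symm.trans htrace
  rw [← pow_three', ← sq, trace_pow_eq_sum_eigenvalues_pow hherm,
    trace_pow_eq_sum_eigenvalues_pow hherm]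
  simp only [Fin.sum_univ_three, RCLike.ofReal_real_eq_id, id_eq] at hsum ⊢
  rw [sum_sq_pow_three_eq_of_sum_eq_zero hsum]
  exact le_add_of_nonneg_right (by positivity)

theorem le_add_of_six_mul_sq_le_cube {s t u : ℝ} (hs : 0 < s) (h : 6 * u ^ 2 ≤ t ^ 3) :
    u ≤ s / 6 * t + t ^ 2 / (4 * s) := by
  have ht : 0 ≤ t := (Odd.pow_nonneg_iff (by decide)).1 ((by positivity : 0 ≤ 6 * u ^ 2).trans h)
  refine le_of_sq_le_sq ?_ (by positivity)
  calc u ^ 2 ≤ t ^ 3 / 6 := by linarith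
    _ = 4 * (s / 6 * t) * (t ^ 2 / (4 * s)) := by field_simp
    _ ≤ (s / 6 * t + t ^ 2 / (4 * s)) ^ 2 := four_mul_le_sq_add _ _

/-- The uniaxial tensor `s (e ⊗ e - I / 3)` of amplitude `s`, with director `e` the first basis
vector. -/
def uniaxial (s : ℝ) : Mat3 := diagonal ![2 * s / 3, -s / 3, -s / 3]

theorem uniaxial_mem_Sym0 (s : ℝ) : uniaxial s ∈ Sym0 := by
  refine ⟨isSymm_diagonal _, ?_⟩
  simp only [uniaxial, trace_diagonal, Fin.sum_univ_three, cons_val]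
  ring

theorem fLdG_uniaxial (a b c C s : ℝ) :
    fLdG a b c C (uniaxial s) = C - a / 3 * s ^ 2 - 2 * b / 27 * s ^ 3 + c / 9 * s ^ 4 := by
  simp only [fLdG, uniaxial, diagonal_mul_diagonal, trace_diagonal, Fin.sum_univ_three, cons_val]
  ring

theorem mul_sq_add_fLdG_uniaxial_le_fLdG {a b c C s : ℝ} (hb : 0 ≤ b) (hs : 0 < s)
    (hcrit : 2 * c * s ^ 2 = b * s + 3 * a) {Q : Mat3} (hQ : Q ∈ Sym0) :
    (c / 4 - b / (12 * s)) * ((Q * Q).trace - 2 / 3 * s ^ 2) ^ 2 + fLdG a b c C (uniaxial s) ≤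
      fLdG a b c C Q := by
  have hcube := le_add_of_six_mul_sq_le_cube hs (six_mul_trace_cube_sq_le hQ)
  rw [fLdG_uniaxial, fLdG]
  generalize (Q * Q * Q).trace = u at hcube ⊢
  generalize (Q * Q).trace = t at hcube ⊢
  have ha : a = (2 * c * s ^ 2 - b * s) / 3 := by linarith
  calc (c / 4 - b / (12 * s)) * (t - 2 / 3 * s ^ 2) ^ 2 +
        (C - a / 3 * s ^ 2 - 2 * b / 27 * s ^ 3 + c / 9 * s ^ 4)
      = C - a / 2 * t - b / 3 * (s / 6 * t + t ^ 2 / (4 * s)) + c / 4 * t ^ 2 := by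
        rw [ha]; field_simp; ring
    _ ≤ C - a / 2 * t - b / 3 * u + c / 4 * t ^ 2 := by gcongr

theorem two_mul_mul_sStar_sq {a b c : ℝ} (hc : c ≠ 0) (hdisc : 0 ≤ b ^ 2 + 24 * a * c) :
    2 * c * sStar a b c ^ 2 = b * sStar a b c + 3 * a := by
  have hsqrt := Real.sq_sqrt hdisc
  rw [sStar]
  generalize √(b ^ 2 + 24 * a * c) = w at hsqrt ⊢
  field_simp
  linear_combination 2 * hsqrt

theorem lt_three_mul_mul_sStar {a b c : ℝ} (hc : 0 < c) (hac : -b ^ 2 < 27 * a * c) :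
    b < 3 * c * sStar a b c := by
  have hsqrt : b / 3 < √(b ^ 2 + 24 * a * c) := Real.lt_sqrt_of_sq_lt (by linarith)
  calc b < 3 / 4 * (b + √(b ^ 2 + 24 * a * c)) := by linarith
    _ = 3 * c * sStar a b c := by rw [sStar]; field_simp

theorem statement2_general (a b c C : ℝ) (hb : 0 ≤ b) (hc : 0 < c) (hac : -b ^ 2 < 27 * a * c)
    (hC : ∀ Q ∈ Sym0, 0 ≤ fLdG a b c C Q) :
    0 < c / 4 - b / (12 * sStar a b c) ∧ ∀ Q ∈ Sym0,
      (c / 4 - b / (12 * sStar a b c)) * ((Q * Q).trace - 2 / 3 * (sStar a b c) ^ 2) ^ 2 ≤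
        fLdG a b c C Q := by
  have hlt : b < 3 * c * sStar a b c := lt_three_mul_mul_sStar hc hac
  have hs : 0 < sStar a b c := pos_of_mul_pos_right (hb.trans_lt hlt) (by positivity)
  have hcrit := two_mul_mul_sStar_sq (a := a) (b := b) hc.ne' (by linarith [sq_nonneg b])
  refine ⟨?_, fun Q hQ ↦ ?_⟩
  · rw [sub_pos, div_lt_div_iff₀ (by positivity) (by positivity)]
    linarith
  · exact (le_add_of_nonneg_right (hC _ (uniaxial_mem_Sym0 _))).trans
      (mul_sq_add_fLdG_uniaxial_le_fLdG hb hs hcrit hQ)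

theorem statement2 (a b c C : ℝ) (ha : 0 < a) (hb : 0 < b) (hc : 0 < c)
    (hC : IsLeast (fLdG a b c C '' Sym0) 0) :
    ∃ C₁ > (0 : ℝ), ∀ Q ∈ Sym0,
      C₁ * ((Q * Q).trace - 2 / 3 * (sStar a b c) ^ 2) ^ 2 ≤ fLdG a b c C Q :=
  ⟨_, statement2_general a b c C hb.le hc (by nlinarith [mul_pos ha hc])
    (Set.forall_mem_image.1 hC.2)⟩
end
end

section
/- There exist constants t₀, C > 0 such that for every t ∈ (0, t₀] the function Q ↦ f(Q) + t·g(Q) attains a unique global minimum on Sym₀; the minimizer has the form s'·( e₃⊗e₃ − (1/3)I ) for some s' ∈ ℝ with |s' − s*| ≤ C·t, and the minimum value m(t) := min_{Q∈Sym₀} ( f(Q) + t·g(Q) ) satisfies −C·t² ≤ m(t) ≤ 0. -/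
/- STATEMENT 6: There exist t₀, C > 0 such that for every t ∈ (0, t₀] the function
Q ↦ f(Q) + t·g(Q) attains a unique global minimum on Sym₀; the minimizer has the form
s'·(e₃⊗e₃ − (1/3)I) with |s' − s*| ≤ C·t, and the minimum value m(t) satisfies
−C·t² ≤ m(t) ≤ 0. Here g(Q) = (2/3)s* − Q₃₃. -/

noncomputable section

open Matrix

def unitVec (n : Fin 3 → ℝ) : Prop := ∑ i, (n i) ^ 2 = 1

def uniax (s : ℝ) (n : Fin 3 → ℝ) : Mat3 :=
  s • (Matrix.vecMulVec n n - (1 / 3 : ℝ) • (1 : Mat3))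

/-- The magnetic potential g(Q) = (2/3)s* − Q₃₃. -/
def gMag (sS : ℝ) (Q : Mat3) : ℝ := 2 / 3 * sS - Q 2 2

/-- e₃ = (0,0,1). -/
def e3 : Fin 3 → ℝ := fun i => if i = 2 then 1 else 0

/-!
Give `Q ∈ Sym₀` the amplitude `s = √(3/2 tr Q²) ≥ 0`, so that `Q` has the Frobenius norm of
`U = s(n⊗n − I/3)` for every unit vector `n`. Expanding `|Q − r(n⊗n − I/3)|² ≥ 0` with the best
`r` bounds `n·Qn` by `2s/3`, and at `r = s` it shows that equality forces `Q = U`. Hence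
`(2s/3)I − Q` is positive semidefinite, and conjugating it by `Q + (s/3)I` and taking the trace
gives `tr Q³ ≤ 2s³/9`. So `f + t g` at `Q` is at least its value at `s(e₃⊗e₃ − I/3)`, with equality
only for that matrix, and the problem is reduced to a quartic polynomial in `s ≥ 0`. Its value at
`s < s*` exceeds the one at `s*`, while `s = s* + u` with `u ≥ 0` leads to minimizing
`A u² + B u³ + D u⁴ − (2t/3) u` where `A > 0` and `B, D ≥ 0`.
-/

section Quartic

/-- The quartic `A u² + B u³ + D u⁴` without constant term, tilted by the linear term `-r u`. -/
def tiltedQuartic (A B D r u : ℝ) : ℝ := A * u ^ 2 + B * u ^ 3 + D * u ^ 4 - r * u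

variable {A B D r u v : ℝ}

lemma exists_tiltedQuartic_stationary (hA : 0 < A) (hB : 0 ≤ B) (hD : 0 ≤ D) (hr : 0 ≤ r) :
    ∃ u ∈ Set.Icc 0 (r / (2 * A)), 2 * A * u + 3 * B * u ^ 2 + 4 * D * u ^ 3 = r := by
  let q' : ℝ → ℝ := fun u => 2 * A * u + 3 * B * u ^ 2 + 4 * D * u ^ 3
  have hmax : 0 ≤ r / (2 * A) := by positivity
  have hcont : ContinuousOn q' (Set.Icc 0 (r / (2 * A))) := by fun_prop
  refine intermediate_value_Icc hmax hcont ⟨by simpa [q'] using hr, ?_⟩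
  calc r = 2 * A * (r / (2 * A)) := by field_simp
    _ ≤ q' (r / (2 * A)) := by
      simp only [q', add_assoc]
      exact le_add_of_nonneg_right (by positivity)

lemma tiltedQuartic_lt_of_stationary (hA : 0 < A) (hB : 0 ≤ B) (hD : 0 ≤ D)
    (hu : 0 ≤ u) (hstat : 2 * A * u + 3 * B * u ^ 2 + 4 * D * u ^ 3 = r)
    (hv : 0 ≤ v) (hvu : v ≠ u) : tiltedQuartic A B D r u < tiltedQuartic A B D r v := by
  have hsub : tiltedQuartic A B D r v - tiltedQuartic A B D r u =
      (v - u) ^ 2 * (A + B * (v + 2 * u) + D * (v ^ 2 + 2 * v * u + 3 * u ^ 2)) := by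
    rw [tiltedQuartic, tiltedQuartic, ← hstat]
    ring
  rw [← sub_pos, hsub]
  exact mul_pos (sq_pos_of_ne_zero (sub_ne_zero.mpr hvu)) (by positivity)

lemma exists_tiltedQuartic_minimizer (hA : 0 < A) (hB : 0 ≤ B) (hD : 0 ≤ D) (hr : 0 ≤ r) :
    ∃ u ∈ Set.Icc 0 (r / (2 * A)),
      (∀ v, 0 ≤ v → v ≠ u → tiltedQuartic A B D r u < tiltedQuartic A B D r v) ∧
      -(r ^ 2 / (2 * A)) ≤ tiltedQuartic A B D r u ∧ tiltedQuartic A B D r u ≤ 0 := by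
  obtain ⟨u, ⟨hu, hur⟩, hstat⟩ := exists_tiltedQuartic_stationary hA hB hD hr
  have hmin := fun v => tiltedQuartic_lt_of_stationary (v := v) hA hB hD hu hstat
  have hzero : tiltedQuartic A B D r 0 = 0 := by simp [tiltedQuartic]
  refine ⟨u, ⟨hu, hur⟩, hmin, ?_, ?_⟩
  · have hlin : r * u ≤ r ^ 2 / (2 * A) :=
      calc r * u ≤ r * (r / (2 * A)) := by gcongr
        _ = r ^ 2 / (2 * A) := by ring
    have hpos : 0 ≤ A * u ^ 2 + B * u ^ 3 + D * u ^ 4 := by positivity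
    rw [tiltedQuartic]
    linarith
  · rcases eq_or_ne 0 u with rfl | hne
    · exact hzero.le
    · exact (hmin 0 le_rfl hne).le.trans_eq hzero

end Quartic

section Profile

/-- The bulk potential of `uniax s n`, which is the same for all unit vectors `n`. -/
def bulkProfile (a b c C s : ℝ) : ℝ := C - a / 3 * s ^ 2 - 2 * b / 27 * s ^ 3 + c / 9 * s ^ 4

/-- The energy `f + t g` of `uniax s e3`, where `g` is normalized to vanish at `uniax σ e3`. -/
def tiltedProfile (a b c C σ t s : ℝ) : ℝ := bulkProfile a b c C s + t * (2 / 3 * (σ - s))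

/-- `σ` is a positive critical point of the bulk profile at which the profile attains its minimum
over `[0, ∞)`. The inequality `b ≤ 3cσ` expresses minimality: at `b = 3cσ` the isotropic state
`s = 0` has the same energy. -/
structure IsNematicAmplitude (a b c σ : ℝ) : Prop where
  c_pos : 0 < c
  pos : 0 < σ
  stationary : 2 * c * σ ^ 2 = b * σ + 3 * a
  le_three_mul : b ≤ 3 * c * σ

variable {a b c C σ s t : ℝ}

lemma isNematicAmplitude_sStar (hc : 0 < c) (hdisc : 0 ≤ b ^ 2 + 27 * a * c)
    (hpos : 0 < sStar a b c) : IsNematicAmplitude a b c (sStar a b c) := by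
  have hdisc' : (b / 3) ^ 2 ≤ b ^ 2 + 24 * a * c := by linarith
  have hsqrt : b / 3 ≤ √(b ^ 2 + 24 * a * c) := Real.le_sqrt_of_sq_le hdisc'
  have hsq : √(b ^ 2 + 24 * a * c) ^ 2 = b ^ 2 + 24 * a * c :=
    Real.sq_sqrt ((sq_nonneg _).trans hdisc')
  have hmul : 4 * c * sStar a b c = b + √(b ^ 2 + 24 * a * c) := by
    rw [sStar, mul_div_cancel₀ _ (by positivity)]
  refine ⟨hc, hpos, mul_left_cancel₀ (by positivity : 8 * c ≠ 0) ?_, by linarith⟩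
  linear_combination (4 * c * sStar a b c - b + √(b ^ 2 + 24 * a * c)) * hmul + hsq

lemma bulkProfile_eq_of_stationary (hσ : 2 * c * σ ^ 2 = b * σ + 3 * a) (C s : ℝ) :
    bulkProfile a b c C s = bulkProfile a b c C σ +
      (s - σ) ^ 2 / 9 * (c * s ^ 2 + 2 / 3 * (3 * c * σ - b) * (s + σ / 2)) := by
  obtain rfl : a = (2 * c * σ ^ 2 - b * σ) / 3 := by linarith
  simp only [bulkProfile]
  ring

lemma bulkProfile_le (hσ : IsNematicAmplitude a b c σ) (C : ℝ) (hs : 0 ≤ s) :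
    bulkProfile a b c C σ ≤ bulkProfile a b c C s := by
  have := hσ.c_pos
  have := hσ.pos
  have : 0 ≤ 3 * c * σ - b := sub_nonneg.mpr hσ.le_three_mul
  rw [bulkProfile_eq_of_stationary hσ.stationary C s]
  exact le_add_of_nonneg_right (by positivity)

lemma tiltedProfile_add (hσ : 2 * c * σ ^ 2 = b * σ + 3 * a) (C t u : ℝ) :
    tiltedProfile a b c C σ t (σ + u) = bulkProfile a b c C σ +
      tiltedQuartic (σ * (4 * c * σ - b) / 9) (2 * (6 * c * σ - b) / 27) (c / 9) (2 / 3 * t) u := by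
  rw [tiltedProfile, bulkProfile_eq_of_stationary hσ, tiltedQuartic]
  ring

lemma bulkProfile_lt_tiltedProfile (hσ : IsNematicAmplitude a b c σ) (C : ℝ) (ht : 0 < t)
    (hs : 0 ≤ s) (hsσ : s < σ) : bulkProfile a b c C σ < tiltedProfile a b c C σ t s := by
  have : 0 < σ - s := sub_pos.mpr hsσ
  exact lt_add_of_le_of_pos (bulkProfile_le hσ C hs) (by positivity)

lemma exists_tiltedProfile_minimizer (hσ : IsNematicAmplitude a b c σ) (C : ℝ) :
    ∃ K > 0, ∀ t > 0, ∃ s', |s' - σ| ≤ K * t ∧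
      (∀ s, 0 ≤ s → s ≠ s' → tiltedProfile a b c C σ t s' < tiltedProfile a b c C σ t s) ∧
      bulkProfile a b c C σ - K * t ^ 2 ≤ tiltedProfile a b c C σ t s' ∧
      tiltedProfile a b c C σ t s' ≤ bulkProfile a b c C σ := by
  have hcσ : 0 < c * σ := mul_pos hσ.c_pos hσ.pos
  have hA : 0 < σ * (4 * c * σ - b) / 9 :=
    div_pos (mul_pos hσ.pos (by linarith [hσ.le_three_mul])) (by norm_num)
  have hB : 0 ≤ 2 * (6 * c * σ - b) / 27 := by linarith [hσ.le_three_mul]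
  have hD : 0 ≤ c / 9 := by linarith [hσ.c_pos]
  have htilt := tiltedProfile_add hσ.stationary C
  generalize σ * (4 * c * σ - b) / 9 = A at hA htilt
  refine ⟨1 / (3 * A), by positivity, fun t ht => ?_⟩
  obtain ⟨u, ⟨hu, hut⟩, hmin, hlower, hupper⟩ :=
    exists_tiltedQuartic_minimizer (r := 2 / 3 * t) hA hB hD (by positivity)
  have hle : tiltedProfile a b c C σ t (σ + u) ≤ bulkProfile a b c C σ := by
    rw [htilt]
    exact add_le_of_nonpos_right hupper
  refine ⟨σ + u, ?_, fun s hs hne => ?_, ?_, hle⟩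
  · rw [add_sub_cancel_left, abs_of_nonneg hu]
    exact hut.trans_eq (by field_simp)
  · rcases lt_or_ge s σ with hsσ | hσs
    · exact hle.trans_lt (bulkProfile_lt_tiltedProfile hσ C ht hs hsσ)
    · obtain ⟨v, hv, rfl⟩ := exists_nonneg_add_of_le hσs
      rw [htilt, htilt]
      exact add_lt_add_right (hmin v hv fun h => hne (h ▸ rfl)) _
  · have hK : (2 / 3 * t) ^ 2 / (2 * A) ≤ 1 / (3 * A) * t ^ 2 := by
      field_simp
      norm_num
    rw [htilt]
    linarith

end Profile

section SymmetricMatrix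

variable {ι : Type*} [Fintype ι] {M : Matrix ι ι ℝ}

lemma trace_mul_self_nonneg (hM : M.IsSymm) : 0 ≤ (M * M).trace := by
  simpa only [(isHermitian_iff_isSymm.mpr hM).eq] using
    (posSemidef_conjTranspose_mul_self M).trace_nonneg

lemma trace_mul_self_eq_zero_iff (hM : M.IsSymm) : (M * M).trace = 0 ↔ M = 0 := by
  simpa only [(isHermitian_iff_isSymm.mpr hM).eq] using
    trace_conjTranspose_mul_self_eq_zero_iff (A := M)

lemma dotProduct_mulVec_le_of_unit {k : ℝ} (h : ∀ n, n ⬝ᵥ n = 1 → n ⬝ᵥ M *ᵥ n ≤ k) (x : ι → ℝ) :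
    x ⬝ᵥ M *ᵥ x ≤ k * (x ⬝ᵥ x) := by
  rcases eq_or_ne x 0 with rfl | hx
  · simp
  have hpos : 0 < x ⬝ᵥ x := by simpa using dotProduct_star_self_pos_iff.mpr hx
  have hsq : √(x ⬝ᵥ x) * √(x ⬝ᵥ x) = x ⬝ᵥ x := Real.mul_self_sqrt hpos.le
  have hscaled := h ((√(x ⬝ᵥ x))⁻¹ • x) (by
    rw [smul_dotProduct, dotProduct_smul, smul_smul, ← mul_inv, hsq, smul_eq_mul,
      inv_mul_cancel₀ hpos.ne'])
  rw [mulVec_smul, smul_dotProduct, dotProduct_smul, smul_smul, ← mul_inv, hsq, smul_eq_mul,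
    inv_mul_le_iff₀ hpos] at hscaled
  linarith

lemma posSemidef_smul_one_sub [DecidableEq ι] (hM : M.IsSymm) {k : ℝ}
    (h : ∀ n, n ⬝ᵥ n = 1 → n ⬝ᵥ M *ᵥ n ≤ k) : (k • (1 : Matrix ι ι ℝ) - M).PosSemidef := by
  refine .of_dotProduct_mulVec_nonneg (isHermitian_iff_isSymm.mpr ((isSymm_one.smul k).sub hM))
    fun x => ?_
  rw [star_trivial, sub_mulVec, smul_mulVec, one_mulVec, dotProduct_sub, dotProduct_smul,
    smul_eq_mul]
  exact sub_nonneg.mpr (dotProduct_mulVec_le_of_unit h x)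

end SymmetricMatrix

section Uniaxial

variable {n : Fin 3 → ℝ} {Q : Mat3}

lemma unitVec_iff_dotProduct_self : unitVec n ↔ n ⬝ᵥ n = 1 := by
  simp only [unitVec, dotProduct, sq]

lemma unitVec_e3 : unitVec e3 := by simp [unitVec, e3]

lemma dotProduct_mulVec_e3 (Q : Mat3) : e3 ⬝ᵥ Q *ᵥ e3 = Q 2 2 := by
  simp [e3, dotProduct, mulVec]

lemma uniax_mem_Sym0 (s : ℝ) (hn : unitVec n) : uniax s n ∈ Sym0 := by
  refine ⟨IsSymm.smul (IsSymm.sub (transpose_vecMulVec n n) (isSymm_one.smul _)) s, ?_⟩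
  simp [uniax, unitVec_iff_dotProduct_self.mp hn]

/-- The minimal polynomial of a uniaxial tensor, whose eigenvalues are `2s/3` and `-s/3`. -/
lemma uniax_mul_self (s : ℝ) (hn : unitVec n) :
    uniax s n * uniax s n = (s / 3) • uniax s n + (2 / 9 * s ^ 2) • (1 : Mat3) := by
  have hidem : vecMulVec n n * vecMulVec n n = vecMulVec n n := by
    rw [vecMulVec_mul_vecMulVec, unitVec_iff_dotProduct_self.mp hn, one_smul]
  simp only [uniax, sub_mul, mul_sub, hidem, smul_mul_assoc, mul_smul_comm,
    one_mul, mul_one]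
  module

lemma trace_uniax_mul_self (s : ℝ) (hn : unitVec n) :
    (uniax s n * uniax s n).trace = 2 / 3 * s ^ 2 := by
  simp only [uniax_mul_self s hn, trace_add, trace_smul, (uniax_mem_Sym0 s hn).2, trace_one,
    Fintype.card_fin, smul_eq_mul]
  push_cast
  ring

lemma trace_uniax_cube (s : ℝ) (hn : unitVec n) :
    (uniax s n * uniax s n * uniax s n).trace = 2 / 9 * s ^ 3 := by
  rw [uniax_mul_self s hn, add_mul, smul_mul_assoc, smul_mul_assoc, one_mul, trace_add,
    trace_smul, trace_smul, trace_uniax_mul_self s hn, (uniax_mem_Sym0 s hn).2, smul_eq_mul]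
  simp only [smul_zero, add_zero]
  ring

lemma trace_mul_uniax (hQ : Q.trace = 0) (s : ℝ) (n : Fin 3 → ℝ) :
    (Q * uniax s n).trace = s * (n ⬝ᵥ Q *ᵥ n) := by
  simp [uniax, mul_sub, mul_vecMulVec, trace_vecMulVec, hQ, dotProduct_comm]

lemma trace_sub_uniax_mul_self (hQ : Q.trace = 0) (s : ℝ) (hn : unitVec n) :
    ((Q - uniax s n) * (Q - uniax s n)).trace =
      (Q * Q).trace - 2 * s * (n ⬝ᵥ Q *ᵥ n) + 2 / 3 * s ^ 2 := by
  rw [sub_mul, mul_sub, mul_sub, trace_sub, trace_sub, trace_sub, trace_mul_comm (uniax s n) Q,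
    trace_mul_uniax hQ, trace_uniax_mul_self s hn]
  ring

end Uniaxial

section ScalarOrder

variable {n : Fin 3 → ℝ} {Q : Mat3}

/-- The amplitude `s ≥ 0` of the uniaxial tensors `uniax s n` with the Frobenius norm of `Q`. -/
def scalarOrder (Q : Mat3) : ℝ := √(3 / 2 * (Q * Q).trace)

lemma scalarOrder_nonneg (Q : Mat3) : 0 ≤ scalarOrder Q := Real.sqrt_nonneg _

lemma trace_mul_self_eq_scalarOrder (hQ : Q.IsSymm) :
    (Q * Q).trace = 2 / 3 * scalarOrder Q ^ 2 := by
  have := trace_mul_self_nonneg hQ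
  rw [scalarOrder, Real.sq_sqrt (by positivity)]
  ring

lemma dotProduct_mulVec_le_scalarOrder (hQ : Q ∈ Sym0) (hn : unitVec n) :
    n ⬝ᵥ Q *ᵥ n ≤ 2 / 3 * scalarOrder Q := by
  have := scalarOrder_nonneg Q
  -- This amplitude minimizes the Frobenius distance from `Q` to the line through `uniax 1 n`.
  have hdist := trace_mul_self_nonneg
    (hQ.1.sub (uniax_mem_Sym0 (3 / 2 * (n ⬝ᵥ Q *ᵥ n)) hn).1)
  rw [trace_sub_uniax_mul_self hQ.2 _ hn, trace_mul_self_eq_scalarOrder hQ.1] at hdist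
  refine le_of_sq_le_sq ?_ (by positivity)
  linarith

lemma eq_uniax_of_dotProduct_mulVec_eq (hQ : Q ∈ Sym0) (hn : unitVec n)
    (h : n ⬝ᵥ Q *ᵥ n = 2 / 3 * scalarOrder Q) : Q = uniax (scalarOrder Q) n := by
  rw [← sub_eq_zero, ← trace_mul_self_eq_zero_iff (hQ.1.sub (uniax_mem_Sym0 _ hn).1),
    trace_sub_uniax_mul_self hQ.2 _ hn, trace_mul_self_eq_scalarOrder hQ.1, h]
  ring

lemma posSemidef_scalarOrder_sub (hQ : Q ∈ Sym0) :
    ((2 / 3 * scalarOrder Q) • (1 : Mat3) - Q).PosSemidef :=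
  posSemidef_smul_one_sub hQ.1 fun _ hn =>
    dotProduct_mulVec_le_scalarOrder hQ (unitVec_iff_dotProduct_self.mpr hn)

lemma trace_cube_le_of_posSemidef (hQ : Q ∈ Sym0) {s : ℝ}
    (hpsd : ((2 / 3 * s) • (1 : Mat3) - Q).PosSemidef) : (Q * Q * Q).trace ≤ 2 / 9 * s ^ 3 := by
  have hB : (Q + (s / 3) • (1 : Mat3)).IsHermitian :=
    isHermitian_iff_isSymm.mpr (hQ.1.add (isSymm_one.smul _))
  have hexpand : (Q + (s / 3) • (1 : Mat3)) * ((2 / 3 * s) • (1 : Mat3) - Q)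
      * (Q + (s / 3) • (1 : Mat3)) =
      (2 / 27 * s ^ 3) • (1 : Mat3) + (s ^ 2 / 3) • Q - Q * Q * Q := by
    simp only [add_mul, mul_add, sub_mul, mul_sub, smul_mul_assoc, mul_smul_comm, one_mul, mul_one]
    module
  have htrace := (hpsd.mul_mul_conjTranspose_same (Q + (s / 3) • (1 : Mat3))).trace_nonneg
  rw [hB.eq, hexpand, trace_sub, trace_add, trace_smul, trace_smul, hQ.2, trace_one,
    Fintype.card_fin] at htrace
  simp only [smul_eq_mul] at htrace
  push_cast at htrace
  linarith

lemma trace_cube_le_scalarOrder (hQ : Q ∈ Sym0) :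
    (Q * Q * Q).trace ≤ 2 / 9 * scalarOrder Q ^ 3 :=
  trace_cube_le_of_posSemidef hQ (posSemidef_scalarOrder_sub hQ)

end ScalarOrder

section Energy

variable {a b c C σ t : ℝ} {n : Fin 3 → ℝ} {Q : Mat3}

lemma fLdG_uniax (a b c C s : ℝ) (hn : unitVec n) :
    fLdG a b c C (uniax s n) = bulkProfile a b c C s := by
  rw [fLdG, bulkProfile, trace_uniax_mul_self s hn, trace_uniax_cube s hn]
  ring

lemma gMag_uniax (σ s : ℝ) : gMag σ (uniax s e3) = 2 / 3 * (σ - s) := by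
  have hentry : uniax s e3 2 2 = 2 / 3 * s := by
    norm_num [uniax, e3, vecMulVec_apply, mul_comm]
  rw [gMag, hentry, mul_sub]

lemma energy_uniax (a b c C σ t s : ℝ) :
    fLdG a b c C (uniax s e3) + t * gMag σ (uniax s e3) = tiltedProfile a b c C σ t s := by
  rw [fLdG_uniax a b c C s unitVec_e3, gMag_uniax, tiltedProfile]

lemma bulkProfile_scalarOrder_le_fLdG (hb : 0 ≤ b) (a c C : ℝ) (hQ : Q ∈ Sym0) :
    bulkProfile a b c C (scalarOrder Q) ≤ fLdG a b c C Q := by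
  have hcube := mul_le_mul_of_nonneg_left (trace_cube_le_scalarOrder hQ)
    (by positivity : 0 ≤ b / 3)
  rw [bulkProfile, fLdG, trace_mul_self_eq_scalarOrder hQ.1]
  linarith

lemma le_gMag_scalarOrder (σ : ℝ) (hQ : Q ∈ Sym0) : 2 / 3 * (σ - scalarOrder Q) ≤ gMag σ Q := by
  have := dotProduct_mulVec_le_scalarOrder hQ unitVec_e3
  rw [dotProduct_mulVec_e3] at this
  rw [gMag]
  linarith

lemma eq_uniax_of_gMag_le (hQ : Q ∈ Sym0) (h : gMag σ Q ≤ 2 / 3 * (σ - scalarOrder Q)) :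
    Q = uniax (scalarOrder Q) e3 := by
  refine eq_uniax_of_dotProduct_mulVec_eq hQ unitVec_e3
    (le_antisymm (dotProduct_mulVec_le_scalarOrder hQ unitVec_e3) ?_)
  rw [gMag] at h
  rw [dotProduct_mulVec_e3]
  linarith

lemma tiltedProfile_scalarOrder_le_energy (hb : 0 ≤ b) (a c C σ : ℝ) (ht : 0 ≤ t)
    (hQ : Q ∈ Sym0) :
    tiltedProfile a b c C σ t (scalarOrder Q) ≤ fLdG a b c C Q + t * gMag σ Q :=
  add_le_add (bulkProfile_scalarOrder_le_fLdG hb a c C hQ)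
    (mul_le_mul_of_nonneg_left (le_gMag_scalarOrder σ hQ) ht)

lemma eq_uniax_of_energy_le (hb : 0 ≤ b) (ht : 0 < t) (hQ : Q ∈ Sym0)
    (h : fLdG a b c C Q + t * gMag σ Q ≤ tiltedProfile a b c C σ t (scalarOrder Q)) :
    Q = uniax (scalarOrder Q) e3 := by
  have hbulk := bulkProfile_scalarOrder_le_fLdG hb a c C hQ
  rw [tiltedProfile] at h
  exact eq_uniax_of_gMag_le (σ := σ) hQ (le_of_mul_le_mul_left (by linarith) ht)

lemma isLeast_fLdG_bulkProfile (hb : 0 ≤ b) (hσ : IsNematicAmplitude a b c σ) (C : ℝ) :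
    IsLeast (fLdG a b c C '' Sym0) (bulkProfile a b c C σ) := by
  refine ⟨⟨uniax σ e3, uniax_mem_Sym0 σ unitVec_e3, fLdG_uniax a b c C σ unitVec_e3⟩, ?_⟩
  rintro _ ⟨Q, hQ, rfl⟩
  exact (bulkProfile_le hσ C (scalarOrder_nonneg Q)).trans
    (bulkProfile_scalarOrder_le_fLdG hb a c C hQ)

end Energy

theorem statement6_general (a b c C : ℝ) (hb : 0 ≤ b) (hc : 0 < c)
    (hdisc : 0 ≤ b ^ 2 + 27 * a * c) (hpos : 0 < sStar a b c)
    (hC : IsLeast (fLdG a b c C '' Sym0) 0) :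
    ∃ Cc > (0 : ℝ), ∀ t : ℝ, 0 < t →
      ∃ s' : ℝ, |s' - sStar a b c| ≤ Cc * t ∧
        (∀ Q ∈ Sym0,
          fLdG a b c C (uniax s' e3) + t * gMag (sStar a b c) (uniax s' e3) ≤
            fLdG a b c C Q + t * gMag (sStar a b c) Q) ∧
        (∀ Q ∈ Sym0,
          fLdG a b c C Q + t * gMag (sStar a b c) Q =
            fLdG a b c C (uniax s' e3) + t * gMag (sStar a b c) (uniax s' e3) →
          Q = uniax s' e3) ∧
        -Cc * t ^ 2 ≤
          fLdG a b c C (uniax s' e3) + t * gMag (sStar a b c) (uniax s' e3) ∧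
        fLdG a b c C (uniax s' e3) + t * gMag (sStar a b c) (uniax s' e3) ≤ 0 := by
  have hσ := isNematicAmplitude_sStar hc hdisc hpos
  have hzero : bulkProfile a b c C (sStar a b c) = 0 :=
    (isLeast_fLdG_bulkProfile hb hσ C).unique hC
  obtain ⟨K, hK, hmin⟩ := exists_tiltedProfile_minimizer hσ C
  refine ⟨K, hK, fun t ht => ?_⟩
  obtain ⟨s', hs', hlt, hlower, hupper⟩ := hmin t ht
  rw [hzero] at hlower hupper
  have hprofile (Q : Mat3) (hQ : Q ∈ Sym0) :=
    tiltedProfile_scalarOrder_le_energy hb a c C (sStar a b c) ht.le hQ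
  refine ⟨s', hs', ?_⟩
  rw [energy_uniax]
  refine ⟨fun Q hQ => ?_, fun Q hQ heq => ?_, by linarith, hupper⟩
  · rcases eq_or_ne (scalarOrder Q) s' with rfl | hne
    · exact hprofile Q hQ
    · exact (hlt _ (scalarOrder_nonneg Q) hne).le.trans (hprofile Q hQ)
  · obtain rfl : scalarOrder Q = s' := by
      by_contra hne
      exact ((hlt _ (scalarOrder_nonneg Q) hne).trans_le (hprofile Q hQ)).ne' heq
    exact eq_uniax_of_energy_le hb ht hQ heq.le

theorem statement6 (a b c C : ℝ) (ha : 0 < a) (hb : 0 < b) (hc : 0 < c)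
    (hC : IsLeast (fLdG a b c C '' Sym0) 0) :
    ∃ t₀ > (0 : ℝ), ∃ Cc > (0 : ℝ), ∀ t : ℝ, 0 < t → t ≤ t₀ →
      ∃ s' : ℝ, |s' - sStar a b c| ≤ Cc * t ∧
        (∀ Q ∈ Sym0,
          fLdG a b c C (uniax s' e3) + t * gMag (sStar a b c) (uniax s' e3) ≤
            fLdG a b c C Q + t * gMag (sStar a b c) Q) ∧
        (∀ Q ∈ Sym0,
          fLdG a b c C Q + t * gMag (sStar a b c) Q =
            fLdG a b c C (uniax s' e3) + t * gMag (sStar a b c) (uniax s' e3) →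
          Q = uniax s' e3) ∧
        -Cc * t ^ 2 ≤
          fLdG a b c C (uniax s' e3) + t * gMag (sStar a b c) (uniax s' e3) ∧
        fLdG a b c C (uniax s' e3) + t * gMag (sStar a b c) (uniax s' e3) ≤ 0 := by
  obtain ⟨K, hK, hmin⟩ := statement6_general a b c C hb.le hc (by positivity)
    (by unfold sStar; positivity) hC
  exact ⟨1, one_pos, K, hK, fun t ht _ => hmin t ht⟩
end
end
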